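/- arXiv:1908.06396 — 2 statements merged into one kernel-verified Lean document; each statement's English description precedes it below -/
import Mathlib

section
/- Let Ω ⊂ ℝⁿ (n ≥ 2) be a bounded open convex domain satisfying the exterior sphere condition with radius R > 0. Suppose F : Ω × (−∞,0) → ℝ is continuous and non-decreasing in its second argument, and there are constants A > 0, α ≥ 0, β ≥ n+1 such that 0 < F(x,t) ≤ A·d_x^{β−n−1}·|t|^{−α} for all x ∈ Ω and t < 0. Let γ₃ = β/(n+α) if β < α + n; let γ₃ be any number in (0,1) if α + n ≤ β < α + n + 1; and let γ₃ = 1 if β ≥ α + n + 1. Then every classical solution u of det D²u = F(x,u) in Ω with u = 0 on ∂Ω is γ₃-Hölder continuous on the closure of Ω (Lipschitz continuous when γ₃ = 1). -/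
/-- The determinant of the Hessian matrix of `u` at `x`. -/
noncomputable def hessianDet {n : ℕ} (u : EuclideanSpace ℝ (Fin n) → ℝ)
    (x : EuclideanSpace ℝ (Fin n)) : ℝ :=
  (Matrix.of fun i j : Fin n =>
    iteratedFDeriv ℝ 2 u x ![EuclideanSpace.single i (1 : ℝ), EuclideanSpace.single j (1 : ℝ)]).det

/-- `u` is a classical solution of `det D²u = F(x,u)` in `Ω`, `u = 0` on `∂Ω`. -/
def IsClassicalSolution {n : ℕ} (Ω : Set (EuclideanSpace ℝ (Fin n)))
    (F : EuclideanSpace ℝ (Fin n) → ℝ → ℝ) (u : EuclideanSpace ℝ (Fin n) → ℝ) : Prop :=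
  ContinuousOn u (closure Ω) ∧ ConvexOn ℝ Ω u ∧ ContDiffOn ℝ 2 u Ω ∧
    (∀ x ∈ Ω, u x < 0) ∧ (∀ x ∈ frontier Ω, u x = 0) ∧
    ∀ x ∈ Ω, hessianDet u x = F x (u x)

/-- `F` is continuous on `Ω × (-∞,0)`, non-decreasing in its second argument, and satisfies
`0 < F(x,t) ≤ A d_x^{β-n-1} |t|^{-α}`. -/
def SatisfiesFCond {n : ℕ} (Ω : Set (EuclideanSpace ℝ (Fin n)))
    (F : EuclideanSpace ℝ (Fin n) → ℝ → ℝ) (A α β : ℝ) : Prop :=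
  ContinuousOn (fun p : EuclideanSpace ℝ (Fin n) × ℝ => F p.1 p.2) (Ω ×ˢ Set.Iio (0 : ℝ)) ∧
    (∀ x ∈ Ω, ∀ s t : ℝ, s ≤ t → t < 0 → F x s ≤ F x t) ∧
    ∀ x ∈ Ω, ∀ t : ℝ, t < 0 →
      0 < F x t ∧ F x t ≤ A * Metric.infDist x (frontier Ω) ^ (β - n - 1) * |t| ^ (-α)

/-- `Ω` satisfies the exterior sphere condition with radius `R`: through every boundary
point there is a closed ball of radius `R` containing `Ω`. -/
def ExteriorSphereCond {n : ℕ} (Ω : Set (EuclideanSpace ℝ (Fin n))) (R : ℝ) : Prop :=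
  ∀ x₀ ∈ frontier Ω, ∃ y₀ : EuclideanSpace ℝ (Fin n),
    Ω ⊆ Metric.closedBall y₀ R ∧ x₀ ∈ Metric.sphere y₀ R

open Filter Topology

lemma aux_det_rank_one {n : ℕ} {B : Matrix (Fin n) (Fin n) ℝ} (hB : B.PosDef) (v : Fin n → ℝ) :
    B.det ≤ (B + Matrix.vecMulVec v v).det := by
  rw [Matrix.vecMulVec_eq Unit, Matrix.det_add_replicateCol_mul_replicateRow hB.det_pos.ne'.isUnit]
  have h1 : 0 ≤ v ⬝ᵥ (B⁻¹.mulVec v) := by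
    simpa using hB.inv.posSemidef.dotProduct_mulVec_nonneg v
  have h2 : (1 + Matrix.replicateRow Unit v * B⁻¹ * Matrix.replicateCol Unit v).det
      = 1 + v ⬝ᵥ (B⁻¹.mulVec v) := by
    rw [Matrix.det_unique, Matrix.mul_assoc]
    simp [Matrix.mul_apply, Matrix.mulVec, dotProduct]
  rw [h2]
  nlinarith [hB.det_pos]

lemma aux_det_mono {n : ℕ} {A B : Matrix (Fin n) (Fin n) ℝ} (hB : B.PosDef)
    (hAB : (A - B).PosSemidef) : B.det ≤ A.det := by
  obtain ⟨m, v, hv⟩ := Matrix.posSemidef_iff_eq_sum_vecMulVec.1 hAB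
  have key : ∀ s : Finset (Fin m), (B + ∑ i ∈ s, Matrix.vecMulVec (v i) (star (v i))).PosDef ∧
      B.det ≤ (B + ∑ i ∈ s, Matrix.vecMulVec (v i) (star (v i))).det := by
    intro s
    induction s using Finset.induction_on with
    | empty => simpa using hB
    | insert i s hi ih =>
      rw [Finset.sum_insert hi, add_comm (Matrix.vecMulVec _ _), ← add_assoc]
      refine ⟨ih.1.add_posSemidef (Matrix.posSemidef_vecMulVec_self_star _), ih.2.trans ?_⟩
      simpa using aux_det_rank_one ih.1 (v i)
  have := (key Finset.univ).2
  rw [← hv] at this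
  simpa using this

lemma aux_second_deriv {g g' : ℝ → ℝ} {c : ℝ} (h1 : ∀ᶠ t in 𝓝 0, HasDerivAt g (g' t) t)
    (h2 : HasDerivAt g' c 0) (hmin : IsLocalMin g 0) : 0 ≤ c := by
  by_contra hc
  push Not at hc
  have e1 : deriv g =ᶠ[𝓝 0] g' := h1.mono fun t ht => ht.deriv
  have e2 : deriv (deriv g) 0 = c := by rw [e1.deriv_eq, h2.deriv]
  have hmax : IsLocalMax g 0 :=
    isLocalMax_of_deriv_deriv_neg (by rw [e2]; exact hc) hmin.deriv_eq_zero
      h1.self_of_nhds.continuousAt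
  have e3 : g =ᶠ[𝓝 0] fun _ => g 0 := by
    filter_upwards [hmin, hmax] with t h h' using le_antisymm h' h
  have e4 : deriv (deriv g) 0 = 0 := by
    rw [e3.deriv.deriv_eq]; simp
  linarith

lemma aux_line {n : ℕ} {u : EuclideanSpace ℝ (Fin n) → ℝ} {x v : EuclideanSpace ℝ (Fin n)}
    (hu : ContDiffAt ℝ 2 u x) :
    (∀ᶠ t in 𝓝 (0 : ℝ), HasDerivAt (fun t : ℝ => u (x + t • v)) (fderiv ℝ u (x + t • v) v) t) ∧
    HasDerivAt (fun t : ℝ => fderiv ℝ u (x + t • v) v) (fderiv ℝ (fderiv ℝ u) x v v) 0 := by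
  have hl : ∀ t : ℝ, HasDerivAt (fun t : ℝ => x + t • v) v t := fun t => by
    simpa using ((hasDerivAt_id t).smul_const v).const_add x
  have hc : Tendsto (fun t : ℝ => x + t • v) (𝓝 0) (𝓝 x) := by
    have := (hl 0).continuousAt.tendsto
    simpa using this
  constructor
  · have h := hc.eventually (hu.eventually (by simp))
    filter_upwards [h] with t ht
    exact (ht.differentiableAt (by simp)).hasFDerivAt.comp_hasDerivAt t (hl t)
  · have h : DifferentiableAt ℝ (fderiv ℝ u) x :=
      (hu.fderiv_right (m := 1) (by norm_num)).differentiableAt (by simp)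
    have h' : HasFDerivAt (fderiv ℝ u) (fderiv ℝ (fderiv ℝ u) x) (x + (0:ℝ) • v) := by
      simpa using h.hasFDerivAt
    have := h'.comp_hasDerivAt (0:ℝ) (hl 0)
    exact this.clm_apply (hasDerivAt_const (0:ℝ) v) |>.congr_deriv (by simp)

lemma aux_quad {n : ℕ} (L : EuclideanSpace ℝ (Fin n) →L[ℝ] EuclideanSpace ℝ (Fin n) →L[ℝ] ℝ)
    (v : EuclideanSpace ℝ (Fin n)) :
    v.ofLp ⬝ᵥ ((Matrix.of fun i j : Fin n =>
      L (EuclideanSpace.single i (1 : ℝ)) (EuclideanSpace.single j (1 : ℝ))).mulVec v.ofLp)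
      = L v v := by
  have hv : v = ∑ i, v i • EuclideanSpace.single i (1:ℝ) := by
    ext j
    simp [Finset.sum_apply, Pi.single_apply]
  conv_rhs => rw [hv]
  simp only [map_sum, map_smul, sum_apply, smul_apply,
    Matrix.mulVec, dotProduct, Matrix.of_apply, smul_eq_mul, Finset.mul_sum]
  rw [Finset.sum_comm]
  refine Finset.sum_congr rfl fun i _ => Finset.sum_congr rfl fun j _ => ?_
  ring

/-- If `u` is `C²` at `x` and its second directional derivatives dominate the quadratic form
`a |v|² + a k ⟨z, v⟩²`, then the Hessian determinant is at least `a ^ n (1 + k |z|²)`. -/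
lemma aux_hessianDet {n : ℕ} {u : EuclideanSpace ℝ (Fin n) → ℝ} {x z : EuclideanSpace ℝ (Fin n)}
    (hu : ContDiffAt ℝ 2 u x) {a k : ℝ} (ha : 0 < a) (hk : 0 ≤ k)
    (h : ∀ v, a * ‖v‖ ^ 2 + a * k * (inner ℝ z v) ^ 2 ≤ fderiv ℝ (fderiv ℝ u) x v v) :
    a ^ n * (1 + k * ‖z‖ ^ 2) ≤ hessianDet u x := by
  have hq := aux_quad (fderiv ℝ (fderiv ℝ u) x)
  set B : Matrix (Fin n) (Fin n) ℝ := a • (1 + Matrix.vecMulVec (k • z.ofLp) z.ofLp) with hBdef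
  have hBdet : B.det = a ^ n * (1 + k * ‖z‖ ^ 2) := by
    rw [hBdef, Matrix.det_smul, Matrix.vecMulVec_eq Unit,
      Matrix.det_one_add_replicateCol_mul_replicateRow, EuclideanSpace.real_norm_sq_eq]
    have : z.ofLp ⬝ᵥ k • z.ofLp = k * ∑ i, z.ofLp i ^ 2 := by
      rw [dotProduct_smul, smul_eq_mul]; simp [dotProduct, pow_two]
    rw [this]; simp
  have hB : B.PosDef := by
    rw [hBdef]
    refine Matrix.PosDef.smul (Matrix.PosDef.one.add_posSemidef ?_) ha
    have := (Matrix.posSemidef_vecMulVec_self_star z.ofLp).smul hk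
    simpa [Matrix.smul_vecMulVec] using this
  have hH : hessianDet u x = (Matrix.of fun i j : Fin n => fderiv ℝ (fderiv ℝ u) x
      (EuclideanSpace.single i (1 : ℝ)) (EuclideanSpace.single j (1 : ℝ))).det := by
    unfold hessianDet
    simp [iteratedFDeriv_two_apply]
  rw [hH, ← hBdet]
  refine aux_det_mono hB (Matrix.PosSemidef.of_dotProduct_mulVec_nonneg ?_ ?_)
  · refine Matrix.IsHermitian.sub ?_ hB.1
    ext i j
    have := hu.isSymmSndFDerivAt (by simp)
    simpa using this _ _
  · intro v
    have h1 := hq (WithLp.toLp 2 v)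
    have h2 := h (WithLp.toLp 2 v)
    simp only at h1
    rw [Matrix.sub_mulVec, dotProduct_sub]
    simp only [star_trivial]
    rw [h1]
    have h3 : v ⬝ᵥ B.mulVec v = a * ‖WithLp.toLp 2 v‖ ^ 2
        + a * k * (inner ℝ z (WithLp.toLp 2 v)) ^ 2 := by
      rw [hBdef, Matrix.smul_mulVec, Matrix.add_mulVec, Matrix.one_mulVec,
        Matrix.smul_vecMulVec, Matrix.smul_mulVec, Matrix.vecMulVec_mulVec,
        EuclideanSpace.real_norm_sq_eq]
      have e1 : inner ℝ z (WithLp.toLp 2 v) = z.ofLp ⬝ᵥ v := by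
        simp [PiLp.inner_apply, dotProduct, mul_comm]
      rw [e1]
      simp only [dotProduct_smul, dotProduct_add, smul_eq_mul, MulOpposite.smul_eq_mul_unop]
      have e2 : v ⬝ᵥ v = ∑ i, v i ^ 2 := by simp [dotProduct, pow_two]
      rw [e2, dotProduct_comm v z.ofLp]
      simp
      ring
    rw [h3]; linarith

lemma aux_ray {n : ℕ} {Ω : Set (EuclideanSpace ℝ (Fin n))} (hΩopen : IsOpen Ω)
    (hΩbdd : Bornology.IsBounded Ω) {x w : EuclideanSpace ℝ (Fin n)} (hw : w ≠ 0) {s₀ : ℝ}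
    (h : x + s₀ • w ∈ closure Ω) : ∃ s, s₀ ≤ s ∧ x + s • w ∈ frontier Ω := by
  have hcont : Continuous (fun s : ℝ => x + s • w) := by fun_prop
  set S : Set ℝ := {s | s₀ ≤ s ∧ x + s • w ∈ closure Ω} with hS
  have hSclosed : IsClosed S :=
    (isClosed_Ici (a := s₀)).inter (isClosed_closure.preimage hcont)
  obtain ⟨K, hK⟩ := hΩbdd.closure.exists_norm_le
  have hwpos : 0 < ‖w‖ := norm_pos_iff.2 hw
  have hSbdd : BddAbove S := by
    refine ⟨(K + ‖x‖) / ‖w‖, fun s hs => ?_⟩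
    rw [le_div_iff₀ hwpos]
    have h1 := hK _ hs.2
    have h2 : ‖s • w‖ ≤ ‖x + s • w‖ + ‖x‖ := by
      have := norm_sub_le (x + s • w) x
      simpa using this
    rw [norm_smul, Real.norm_eq_abs] at h2
    have h3 : s * ‖w‖ ≤ |s| * ‖w‖ := by gcongr; exact le_abs_self s
    linarith
  have hSne : S.Nonempty := ⟨s₀, le_rfl, h⟩
  have hmem : sSup S ∈ S := hSclosed.csSup_mem hSne hSbdd
  refine ⟨sSup S, hmem.1, ?_⟩
  rw [frontier, hΩopen.interior_eq]
  refine ⟨hmem.2, fun hin => ?_⟩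
  have hnb : ∀ᶠ s in 𝓝 (sSup S), x + s • w ∈ Ω :=
    hcont.continuousAt.eventually (hΩopen.mem_nhds hin)
  obtain ⟨s, hs1, hs2⟩ :=
    ((hnb.filter_mono nhdsWithin_le_nhds).and (self_mem_nhdsWithin (s := Set.Ioi (sSup S)))).exists
  have hs2' : sSup S < s := hs2
  have : s ∈ S := ⟨hmem.1.trans hs2'.le, subset_closure hs1⟩
  exact absurd (le_csSup hSbdd this) (not_le.2 hs2')

lemma aux_infDist {n : ℕ} (hn : 2 ≤ n) {Ω : Set (EuclideanSpace ℝ (Fin n))} (hΩopen : IsOpen Ω)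
    (hΩbdd : Bornology.IsBounded Ω) {y₀ x : EuclideanSpace ℝ (Fin n)} {R : ℝ}
    (hsub : closure Ω ⊆ Metric.closedBall y₀ R) (hx : x ∈ Ω) :
    Metric.infDist x (frontier Ω) ≤ R - ‖x - y₀‖ := by
  obtain ⟨w, c, hw, hc, hxw⟩ : ∃ (w : EuclideanSpace ℝ (Fin n)) (c : ℝ),
      w ≠ 0 ∧ 0 ≤ c ∧ x - y₀ = c • w := by
    by_cases h : x - y₀ = 0
    · refine ⟨EuclideanSpace.single ⟨0, by omega⟩ 1, 0, ?_, le_rfl, by simp [h]⟩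
      simp
    · exact ⟨x - y₀, 1, h, zero_le_one, by simp⟩
  obtain ⟨s, hs, hz⟩ := aux_ray hΩopen hΩbdd (x := x) (s₀ := 0) hw
    (by simpa using subset_closure hx)
  have h1 : Metric.infDist x (frontier Ω) ≤ s * ‖w‖ := by
    refine (Metric.infDist_le_dist_of_mem hz).trans ?_
    rw [dist_eq_norm]
    simp [norm_smul, abs_of_nonneg hs]
  have h2 : ‖x + s • w - y₀‖ ≤ R := by
    have := hsub (frontier_subset_closure hz)
    rwa [mem_closedBall_iff_norm] at this
  have h3 : x + s • w - y₀ = (c + s) • w := by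
    rw [add_smul, ← hxw]; abel
  rw [h3, norm_smul, Real.norm_eq_abs, abs_of_nonneg (by linarith)] at h2
  rw [hxw, norm_smul, Real.norm_eq_abs, abs_of_nonneg hc]
  linarith

lemma aux_barrier (M γ r p q : ℝ) (hr : 0 < r) :
    (∀ᶠ t in 𝓝 (0:ℝ), HasDerivAt (fun t : ℝ => M * (r - 2 * t * p - t ^ 2 * q) ^ γ)
      (M * ((-(2 * p) - 2 * t * q) * γ * (r - 2 * t * p - t ^ 2 * q) ^ (γ - 1))) t) ∧
    HasDerivAt (fun t : ℝ => M * ((-(2 * p) - 2 * t * q) * γ * (r - 2 * t * p - t ^ 2 * q) ^ (γ - 1)))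
      (-(2 * M * γ * r ^ (γ - 1) * q
        + 2 * M * γ * r ^ (γ - 1) * (2 * (1 - γ) / r) * p ^ 2)) 0 := by
  have hd : ∀ t : ℝ, HasDerivAt (fun t : ℝ => r - 2 * t * p - t ^ 2 * q) (-(2 * p) - 2 * t * q) t := by
    intro t
    have h1 : HasDerivAt (fun t : ℝ => 2 * t * p) (2 * p) t := by
      simpa using ((hasDerivAt_id t).const_mul 2).mul_const p
    have h2 : HasDerivAt (fun t : ℝ => t ^ 2 * q) (2 * t * q) t := by
      simpa using (hasDerivAt_pow 2 t).mul_const q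
    have := (h1.const_sub r).sub h2
    exact this
  constructor
  · have hpos : ∀ᶠ t in 𝓝 (0:ℝ), 0 < r - 2 * t * p - t ^ 2 * q := by
      refine (hd 0).continuousAt.eventually (lt_mem_nhds ?_)
      simpa using hr
    filter_upwards [hpos] with t ht
    exact ((hd t).rpow_const (Or.inl ht.ne')).const_mul M
  · have h1 : HasDerivAt (fun t : ℝ => (-(2 * p) - 2 * t * q) * γ) (-(2 * q) * γ) 0 := by
      have h2 : HasDerivAt (fun t : ℝ => 2 * t * q) (2 * q) 0 := by
        simpa using ((hasDerivAt_id (0:ℝ)).const_mul 2).mul_const q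
      exact (h2.const_sub (-(2 * p))).mul_const γ
    have h2 := (hd 0).rpow_const (p := γ - 1) (Or.inl (by simpa using hr.ne'))
    refine ((h1.mul h2).const_mul M).congr_deriv ?_
    simp only [mul_zero, zero_mul, sub_zero, ne_eq, OfNat.ofNat_ne_zero, not_false_eq_true, zero_pow]
    rw [Real.rpow_sub_one hr.ne' (γ - 1)]
    field_simp
    ring

lemma aux_compare {n : ℕ} (hn : 2 ≤ n) {A α β R γ M : ℝ} (hA : 0 < A) (hα : 0 ≤ α)
    (hR : 0 < R) (hβ : (n : ℝ) + 1 ≤ β) (hγ0 : 0 < γ) (hγ1 : γ ≤ 1) (hM : 0 < M)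
    {Ω : Set (EuclideanSpace ℝ (Fin n))} {F : EuclideanSpace ℝ (Fin n) → ℝ → ℝ}
    {u : EuclideanSpace ℝ (Fin n) → ℝ}
    (hΩopen : IsOpen Ω) (hΩbdd : Bornology.IsBounded Ω)
    (hF : SatisfiesFCond Ω F A α β) (hu : IsClassicalSolution Ω F u)
    (hMc : ∀ ρ d : ℝ, 0 < ρ → ρ ≤ R ^ 2 → 0 ≤ d → d * R ≤ ρ →
      A * d ^ (β - n - 1) * (M * ρ ^ γ) ^ (-α) <
        (2 * M * γ * ρ ^ (γ - 1)) ^ n * (1 + 2 * (1 - γ) / ρ * (R ^ 2 - ρ)))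
    {y₀ : EuclideanSpace ℝ (Fin n)} (hsub : Ω ⊆ Metric.closedBall y₀ R)
    {x : EuclideanSpace ℝ (Fin n)} (hx : x ∈ closure Ω) :
    0 ≤ u x + M * (R ^ 2 - ‖x - y₀‖ ^ 2) ^ γ := by
  obtain ⟨hucont, -, hu2, huneg, hubd, hueq⟩ := hu
  have hcl : closure Ω ⊆ Metric.closedBall y₀ R :=
    closure_minimal hsub Metric.isClosed_closedBall
  have hρ0 : ∀ y ∈ closure Ω, 0 ≤ R ^ 2 - ‖y - y₀‖ ^ 2 := by
    intro y hy
    have := mem_closedBall_iff_norm.1 (hcl hy)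
    nlinarith [norm_nonneg (y - y₀)]
  have hρ : ∀ y ∈ Ω, 0 < R ^ 2 - ‖y - y₀‖ ^ 2 := by
    intro y hy
    have h1 : y ∈ interior (Metric.closedBall y₀ R) := interior_maximal hsub hΩopen hy
    rw [interior_closedBall _ hR.ne', mem_ball_iff_norm] at h1
    nlinarith [norm_nonneg (y - y₀)]
  have hcompact : IsCompact (closure Ω) := hΩbdd.isCompact_closure
  have hgcont : ContinuousOn (fun y => u y + M * (R ^ 2 - ‖y - y₀‖ ^ 2) ^ γ) (closure Ω) := by
    refine hucont.add (continuousOn_const.mul (ContinuousOn.rpow_const (by fun_prop) ?_))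
    intro y _
    exact Or.inr hγ0.le
  obtain ⟨m, hm, hmin⟩ := hcompact.exists_isMinOn ⟨x, hx⟩ hgcont
  by_contra hneg
  push Not at hneg
  have hmneg : u m + M * (R ^ 2 - ‖m - y₀‖ ^ 2) ^ γ < 0 := (hmin hx).trans_lt hneg
  have hmΩ : m ∈ Ω := by
    by_contra hmΩ
    have : m ∈ frontier Ω := by
      rw [frontier, hΩopen.interior_eq]; exact ⟨hm, hmΩ⟩
    rw [hubd m this] at hmneg
    have := Real.rpow_nonneg (hρ0 m hm) γ
    nlinarith
  set ρ := R ^ 2 - ‖m - y₀‖ ^ 2 with hρdef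
  have hρpos : 0 < ρ := hρ m hmΩ
  have hC2 : ContDiffAt ℝ 2 u m := hu2.contDiffAt (hΩopen.mem_nhds hmΩ)
  have hlow : (2 * M * γ * ρ ^ (γ - 1)) ^ n * (1 + 2 * (1 - γ) / ρ * ‖m - y₀‖ ^ 2)
      ≤ hessianDet u m := by
    refine aux_hessianDet hC2 (by positivity)
      (div_nonneg (by linarith) hρpos.le) ?_
    intro v
    obtain ⟨a1, a2⟩ := aux_line (v := v) hC2
    obtain ⟨b1, b2⟩ := aux_barrier M γ ρ (inner ℝ (m - y₀) v) (‖v‖ ^ 2) hρpos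
    have hform : ∀ t : ℝ, R ^ 2 - ‖m + t • v - y₀‖ ^ 2
        = ρ - 2 * t * inner ℝ (m - y₀) v - t ^ 2 * ‖v‖ ^ 2 := by
      intro t
      have e : m + t • v - y₀ = (m - y₀) + t • v := by abel
      rw [e, norm_add_sq_real, norm_smul, inner_smul_right, hρdef, mul_pow, Real.norm_eq_abs,
        sq_abs]
      ring
    have hc : Tendsto (fun t : ℝ => m + t • v) (𝓝 0) (𝓝 m) := by
      have : Continuous (fun t : ℝ => m + t • v) := by fun_prop
      simpa using this.tendsto 0
    have hlm : IsLocalMin (fun t : ℝ => u (m + t • v)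
        + M * (ρ - 2 * t * inner ℝ (m - y₀) v - t ^ 2 * ‖v‖ ^ 2) ^ γ) 0 := by
      filter_upwards [hc.eventually (hΩopen.mem_nhds hmΩ)] with t ht
      have h1 := hmin (subset_closure ht)
      simp only [Set.mem_ofPred_eq, hform] at h1
      simpa [hρdef] using h1
    have := aux_second_deriv
      (g' := fun t => fderiv ℝ u (m + t • v) v + M * ((-(2 * inner ℝ (m - y₀) v) - 2 * t * ‖v‖ ^ 2)
        * γ * (ρ - 2 * t * inner ℝ (m - y₀) v - t ^ 2 * ‖v‖ ^ 2) ^ (γ - 1)))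
      (by filter_upwards [a1, b1] with t h1 h2 using h1.add h2) (a2.add b2) hlm
    linarith
  have hum := huneg m hmΩ
  have hFle := (hF.2.2 m hmΩ (u m) hum).2
  set d := Metric.infDist m (frontier Ω) with hd
  have hd0 : 0 ≤ d := Metric.infDist_nonneg
  have hdR : d ≤ R - ‖m - y₀‖ := aux_infDist hn hΩopen hΩbdd hcl hmΩ
  have hnn := norm_nonneg (m - y₀)
  have hstrict := hMc ρ d hρpos (by rw [hρdef]; nlinarith) hd0 (by rw [hρdef]; nlinarith)
  have hsq : R ^ 2 - ρ = ‖m - y₀‖ ^ 2 := by rw [hρdef]; ring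
  rw [hsq] at hstrict
  have hcomp : |u m| ^ (-α) ≤ (M * ρ ^ γ) ^ (-α) := by
    refine Real.rpow_le_rpow_of_nonpos (by positivity) ?_ (by linarith)
    rw [abs_of_neg hum]; linarith
  have : A * d ^ (β - n - 1) * |u m| ^ (-α) ≤ A * d ^ (β - n - 1) * (M * ρ ^ γ) ^ (-α) := by
    gcongr
  rw [hueq m hmΩ] at hlow
  linarith

lemma aux_const {n : ℕ} (hn : 2 ≤ n) {A α β R γ : ℝ} (hA : 0 < A) (hα : 0 ≤ α)
    (hR : 0 < R) (hβ : (n : ℝ) + 1 ≤ β) (hγ0 : 0 < γ) (hγ1 : γ ≤ 1)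
    (hcase : (γ < 1 ∧ (n + α) * γ ≤ β) ∨ (γ = 1 ∧ α + n + 1 ≤ β)) :
    ∃ M : ℝ, 0 < M ∧ ∀ ρ d : ℝ, 0 < ρ → ρ ≤ R ^ 2 → 0 ≤ d → d * R ≤ ρ →
      A * d ^ (β - n - 1) * (M * ρ ^ γ) ^ (-α) <
        (2 * M * γ * ρ ^ (γ - 1)) ^ n * (1 + 2 * (1 - γ) / ρ * (R ^ 2 - ρ)) := by
  obtain ⟨e, κ, hκ, hq, hlow⟩ : ∃ e κ : ℝ, 0 < κ ∧ 0 ≤ β - 1 - (n + α) * γ + e ∧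
      ∀ ρ, 0 < ρ → ρ ≤ R ^ 2 → κ * ρ ^ (-e) ≤ 1 + 2 * (1 - γ) / ρ * (R ^ 2 - ρ) := by
    rcases hcase with ⟨h1, h2⟩ | ⟨h1, h2⟩
    · refine ⟨1, min 1 (2 * (1 - γ)) * R ^ 2, ?_, by linarith, ?_⟩
      · have : 0 < min 1 (2 * (1 - γ)) := lt_min one_pos (by linarith)
        positivity
      · intro ρ hρ hρR
        rw [Real.rpow_neg_one, ← div_eq_mul_inv, div_le_iff₀ hρ]
        have e1 : (1 + 2 * (1 - γ) / ρ * (R ^ 2 - ρ)) * ρ = ρ + 2 * (1 - γ) * (R ^ 2 - ρ) := by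
          field_simp
        rw [e1]
        have m1 := min_le_left 1 (2 * (1 - γ))
        have m2 := min_le_right 1 (2 * (1 - γ))
        nlinarith
    · refine ⟨0, 1, one_pos, ?_, ?_⟩
      · rw [h1]; linarith
      · intro ρ hρ hρR
        simp [h1]
  set q := β - 1 - (n + α) * γ + e with hqdef
  set K := A * R ^ (-(β - n - 1)) * (R ^ 2) ^ q / ((2 * γ) ^ n * κ) with hK
  have hKpos : 0 < K := by positivity
  refine ⟨K + 1, by linarith, ?_⟩
  set M := K + 1 with hM
  have hM1 : 1 ≤ M := by linarith
  have hM0 : 0 < M := by linarith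
  intro ρ d hρ hρR hd hdR
  have hn1 : (1 : ℝ) ≤ n + α := by
    have : (2 : ℝ) ≤ n := by exact_mod_cast hn
    linarith
  have hMp : K < M ^ ((n : ℝ) + α) := by
    have := Real.rpow_le_rpow_of_exponent_le hM1 hn1
    rw [Real.rpow_one] at this
    linarith
  have hd' : d ^ (β - n - 1) ≤ ρ ^ (β - n - 1) * R ^ (-(β - n - 1)) := by
    rw [Real.rpow_neg hR.le, ← div_eq_mul_inv, ← Real.div_rpow hρ.le hR.le]
    refine Real.rpow_le_rpow hd ?_ (by linarith)
    rwa [le_div_iff₀ hR]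
  have hlhs : (M * ρ ^ γ) ^ (-α) = M ^ (-α) * ρ ^ (-(α * γ)) := by
    rw [Real.mul_rpow hM0.le (by positivity), ← Real.rpow_mul hρ.le]
    congr 2; ring
  have hrhs : (2 * M * γ * ρ ^ (γ - 1)) ^ n = (2 * γ) ^ n * M ^ (n : ℝ) * ρ ^ (n * (γ - 1)) := by
    rw [mul_pow, ← Real.rpow_natCast (ρ ^ (γ - 1)), ← Real.rpow_mul hρ.le, Real.rpow_natCast,
      ← mul_pow, mul_comm (γ - 1)]
    congr 2; ring
  have hρq : ρ ^ q ≤ (R ^ 2) ^ q := Real.rpow_le_rpow hρ.le hρR hq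
  have hexp : ρ ^ (β - n - 1) * ρ ^ (-(α * γ)) = ρ ^ q * (ρ ^ (n * (γ - 1)) * ρ ^ (-e)) := by
    rw [← Real.rpow_add hρ, ← Real.rpow_add hρ, ← Real.rpow_add hρ, hqdef]
    congr 1; ring
  have hMM : M ^ (n : ℝ) = M ^ ((n : ℝ) + α) * M ^ (-α) := by
    rw [← Real.rpow_add hM0]; congr 1; ring
  have hKeq : A * R ^ (-(β - n - 1)) * (R ^ 2) ^ q = K * ((2 * γ) ^ n * κ) := by
    rw [hK]; field_simp
  set P := ρ ^ (n * (γ - 1)) * ρ ^ (-e) with hP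
  have hPpos : 0 < P := by positivity
  have hMα : 0 < M ^ (-α) := by positivity
  calc A * d ^ (β - n - 1) * (M * ρ ^ γ) ^ (-α)
      ≤ A * (ρ ^ (β - n - 1) * R ^ (-(β - n - 1))) * (M ^ (-α) * ρ ^ (-(α * γ))) := by
        rw [hlhs]; gcongr
    _ = A * R ^ (-(β - n - 1)) * (ρ ^ q * P) * M ^ (-α) := by rw [← hexp]; ring
    _ ≤ A * R ^ (-(β - n - 1)) * ((R ^ 2) ^ q * P) * M ^ (-α) := by gcongr
    _ = K * ((2 * γ) ^ n * κ * P * M ^ (-α)) := by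
        rw [← mul_assoc, hKeq]; ring
    _ < M ^ ((n : ℝ) + α) * ((2 * γ) ^ n * κ * P * M ^ (-α)) := by gcongr
    _ = (2 * M * γ * ρ ^ (γ - 1)) ^ n * (κ * ρ ^ (-e)) := by
        rw [hrhs, hMM, hP]; ring
    _ ≤ _ := by
        gcongr
        exact hlow ρ hρ hρR

/-- Theorem 1.3 (i): on a domain satisfying the exterior sphere condition with radius `R`,
every classical solution is `γ₃`-Hölder continuous on the closure of `Ω`
(Lipschitz continuous when `γ₃ = 1`). -/
theorem global_holder_regularity_exterior_sphere
    (n : ℕ) (hn : 2 ≤ n) (A α β R γ₃ : ℝ) (hA : 0 < A) (hα : 0 ≤ α) (hR : 0 < R)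
    (hβ : (n : ℝ) + 1 ≤ β)
    (hγ₃ : (β < α + n ∧ γ₃ = β / (n + α)) ∨
      (α + n ≤ β ∧ β < α + n + 1 ∧ γ₃ ∈ Set.Ioo (0 : ℝ) 1) ∨
      (α + n + 1 ≤ β ∧ γ₃ = 1))
    (Ω : Set (EuclideanSpace ℝ (Fin n))) (F : EuclideanSpace ℝ (Fin n) → ℝ → ℝ)
    (u : EuclideanSpace ℝ (Fin n) → ℝ)
    (hΩopen : IsOpen Ω) (hΩconv : Convex ℝ Ω)
    (hΩbdd : Bornology.IsBounded Ω) (hΩne : Ω.Nonempty)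
    (hΩext : ExteriorSphereCond Ω R)
    (hF : SatisfiesFCond Ω F A α β)
    (hu : IsClassicalSolution Ω F u) :
    ∃ C : ℝ, 0 < C ∧
      ∀ x ∈ closure Ω, ∀ y ∈ closure Ω, |u x - u y| ≤ C * ‖x - y‖ ^ γ₃ := by
  have hn2 : (2 : ℝ) ≤ n := by exact_mod_cast hn
  obtain ⟨hγ0, hγ1, hcase⟩ : 0 < γ₃ ∧ γ₃ ≤ 1 ∧
      ((γ₃ < 1 ∧ (n + α) * γ₃ ≤ β) ∨ (γ₃ = 1 ∧ α + n + 1 ≤ β)) := by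
    rcases hγ₃ with ⟨h1, h2⟩ | ⟨h1, h2, h3⟩ | ⟨h1, h2⟩
    · have hpos : (0 : ℝ) < n + α := by linarith
      have hlt : γ₃ < 1 := by rw [h2, div_lt_one hpos]; linarith
      refine ⟨by rw [h2]; apply div_pos <;> linarith, hlt.le, Or.inl ⟨hlt, ?_⟩⟩
      rw [h2, mul_div_cancel₀ _ hpos.ne']
    · refine ⟨h3.1, h3.2.le, Or.inl ⟨h3.2, ?_⟩⟩
      nlinarith [h3.1, h3.2]
    · exact ⟨by linarith, by linarith, Or.inr ⟨h2, h1⟩⟩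
  obtain ⟨M, hM, hMc⟩ := aux_const hn hA hα hR hβ hγ0 hγ1 hcase
  have hu' := hu
  obtain ⟨hucont, huconv, hu2, huneg, hubd, hueq⟩ := hu
  -- the solution is non-positive on the closure
  have hnonpos : ∀ x ∈ closure Ω, u x ≤ 0 := by
    intro x hx
    by_cases h : x ∈ Ω
    · exact (huneg x h).le
    · exact (hubd x (by rw [frontier, hΩopen.interior_eq]; exact ⟨hx, h⟩)).le
  -- boundary growth estimate
  have hgrow : ∀ x ∈ closure Ω, ∀ z ∈ frontier Ω,
      -u x ≤ M * (2 * R) ^ γ₃ * ‖x - z‖ ^ γ₃ := by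
    intro x hx z hz
    obtain ⟨y₀, hsub, hzs⟩ := hΩext z hz
    have h1 := aux_compare hn hA hα hR hβ hγ0 hγ1 hM hΩopen hΩbdd hF hu' hMc hsub hx
    have hxR : ‖x - y₀‖ ≤ R := mem_closedBall_iff_norm.1
      (closure_minimal hsub Metric.isClosed_closedBall hx)
    have hzR : ‖z - y₀‖ = R := mem_sphere_iff_norm.1 hzs
    have htri : R ≤ ‖x - z‖ + ‖x - y₀‖ := by
      rw [← hzR, norm_sub_rev x z]
      exact norm_sub_le_norm_sub_add_norm_sub z x y₀
    have hnn := norm_nonneg (x - y₀)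
    have h2 : (R ^ 2 - ‖x - y₀‖ ^ 2) ^ γ₃ ≤ (2 * R * ‖x - z‖) ^ γ₃ := by
      refine Real.rpow_le_rpow (by nlinarith) ?_ hγ0.le
      nlinarith [norm_nonneg (x - z)]
    rw [Real.mul_rpow (by positivity) (norm_nonneg _)] at h2
    have h3 := mul_le_mul_of_nonneg_left h2 hM.le
    linarith
  -- convexity on the closure
  have hconv : ∀ x ∈ closure Ω, ∀ y ∈ closure Ω, ∀ t : ℝ, 0 ≤ t → t ≤ 1 →
      u ((1 - t) • x + t • y) ≤ (1 - t) * u x + t * u y := by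
    intro x hx y hy t ht0 ht1
    have hxy : (x, y) ∈ closure (Ω ×ˢ Ω) := by rw [closure_prod_eq]; exact ⟨hx, hy⟩
    have hmaps : ∀ p : EuclideanSpace ℝ (Fin n) × EuclideanSpace ℝ (Fin n),
        p ∈ closure (Ω ×ˢ Ω) → p.1 ∈ closure Ω ∧ p.2 ∈ closure Ω := by
      intro p hp; rw [closure_prod_eq] at hp; exact hp
    have c1 : ContinuousOn (fun p : EuclideanSpace ℝ (Fin n) × EuclideanSpace ℝ (Fin n) =>
        u ((1 - t) • p.1 + t • p.2)) (closure (Ω ×ˢ Ω)) := by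
      refine hucont.comp (by fun_prop) ?_
      intro p hp
      exact hΩconv.closure (hmaps p hp).1 (hmaps p hp).2 (by linarith) ht0 (by ring)
    have c2 : ContinuousOn (fun p : EuclideanSpace ℝ (Fin n) × EuclideanSpace ℝ (Fin n) =>
        (1 - t) * u p.1 + t * u p.2) (closure (Ω ×ˢ Ω)) := by
      refine (continuousOn_const.mul (hucont.comp continuousOn_fst fun p hp => (hmaps p hp).1)).add
        (continuousOn_const.mul (hucont.comp continuousOn_snd fun p hp => (hmaps p hp).2))
    refine le_on_closure (f := fun p : EuclideanSpace ℝ (Fin n) × EuclideanSpace ℝ (Fin n) =>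
        u ((1 - t) • p.1 + t • p.2)) (g := fun p => (1 - t) * u p.1 + t * u p.2) ?_ c1 c2 hxy
    intro p hp
    simpa using huconv.2 hp.1 hp.2 (by linarith : 0 ≤ 1 - t) ht0 (by ring)
  have hone : ∀ x ∈ closure Ω, ∀ y ∈ closure Ω,
      u y - u x ≤ M * (2 * R) ^ γ₃ * ‖x - y‖ ^ γ₃ := by
    intro x hx y hy
    by_cases hxy : y - x = 0
    · have : y = x := sub_eq_zero.1 hxy
      subst this
      simp only [sub_self, norm_zero]
      positivity
    obtain ⟨s, hs, hz⟩ := aux_ray hΩopen hΩbdd (x := x) (s₀ := 1) hxy (by simpa using hy)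
    have hs0 : 0 < s := by linarith
    have ht1 : s⁻¹ ≤ 1 := inv_le_one_of_one_le₀ hs
    have ht0 : 0 < s⁻¹ := by positivity
    have h1 := hconv x hx _ (frontier_subset_closure hz) s⁻¹ ht0.le ht1
    have e1 : (1 - s⁻¹) • x + s⁻¹ • (x + s • (y - x)) = y := by
      rw [smul_add, smul_smul, inv_mul_cancel₀ hs0.ne', sub_smul, one_smul, one_smul]
      abel
    rw [e1, hubd _ hz] at h1
    have h2 := hgrow x hx _ hz
    have e2 : ‖x - (x + s • (y - x))‖ = s * ‖x - y‖ := by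
      rw [sub_add_cancel_left, norm_neg, norm_smul, Real.norm_eq_abs, abs_of_pos hs0,
        norm_sub_rev]
    rw [e2, Real.mul_rpow hs0.le (norm_nonneg _)] at h2
    have h3 : s⁻¹ * s ^ γ₃ ≤ 1 := by
      have : s ^ γ₃ ≤ s := by
        simpa using Real.rpow_le_rpow_of_exponent_le hs hγ1
      calc s⁻¹ * s ^ γ₃ ≤ s⁻¹ * s := by gcongr
        _ = 1 := inv_mul_cancel₀ hs0.ne'
    have hP : 0 ≤ M * (2 * R) ^ γ₃ * ‖x - y‖ ^ γ₃ := by positivity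
    calc u y - u x ≤ s⁻¹ * (-u x) := by linarith
      _ ≤ s⁻¹ * (M * (2 * R) ^ γ₃ * (s ^ γ₃ * ‖x - y‖ ^ γ₃)) := by gcongr
      _ = (s⁻¹ * s ^ γ₃) * (M * (2 * R) ^ γ₃ * ‖x - y‖ ^ γ₃) := by ring
      _ ≤ 1 * (M * (2 * R) ^ γ₃ * ‖x - y‖ ^ γ₃) := by gcongr
      _ = _ := one_mul _
  refine ⟨M * (2 * R) ^ γ₃, by positivity, fun x hx y hy => ?_⟩
  rw [abs_le']
  constructor
  · have := hone y hy x hx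
    rwa [norm_sub_rev] at this
  · have := hone x hx y hy
    linarith
end

section
/- Let Ω ⊂ ℝⁿ (n ≥ 2) be a bounded open convex domain satisfying the interior sphere condition with radius R > 0. Suppose F : Ω × (−∞,0) → ℝ is continuous and non-decreasing in its second argument, and there are constants A > 0, α ≥ 0, β ≥ n+1 such that F(x,t) ≥ A·d_x^{β−n−1}·|t|^{−α} for all x ∈ Ω and t < 0. If u is a classical solution of det D²u = F(x,u) in Ω with u = 0 on ∂Ω, then there is a constant C > 0 depending only on β, α, A, n and R such that |u(y)| ≥ C·d_y^{β/(n+α)} for every y ∈ Ω. -/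
/-- `F` is continuous on `Ω × (-∞,0)`, non-decreasing in its second argument, and satisfies the
lower bound `F(x,t) ≥ A d_x^{β-n-1} |t|^{-α}`. -/
def SatisfiesFLowerBound {n : ℕ} (Ω : Set (EuclideanSpace ℝ (Fin n)))
    (F : EuclideanSpace ℝ (Fin n) → ℝ → ℝ) (A α β : ℝ) : Prop :=
  ContinuousOn (fun p : EuclideanSpace ℝ (Fin n) × ℝ => F p.1 p.2) (Ω ×ˢ Set.Iio (0 : ℝ)) ∧
    (∀ x ∈ Ω, ∀ s t : ℝ, s ≤ t → t < 0 → F x s ≤ F x t) ∧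
    ∀ x ∈ Ω, ∀ t : ℝ, t < 0 →
      A * Metric.infDist x (frontier Ω) ^ (β - n - 1) * |t| ^ (-α) ≤ F x t

/-- `Ω` satisfies the interior sphere condition with radius `R`: through every boundary
point there is a closed ball of radius `R` contained in the closure of `Ω`. -/
def InteriorSphereCond {n : ℕ} (Ω : Set (EuclideanSpace ℝ (Fin n))) (R : ℝ) : Prop :=
  ∀ x₀ ∈ frontier Ω, ∃ y₀ : EuclideanSpace ℝ (Fin n),
    Metric.closedBall y₀ R ⊆ closure Ω ∧ x₀ ∈ Metric.sphere y₀ R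

open Filter Topology

lemma aux_second_deriv_le {φ φ' : ℝ → ℝ} {L c : ℝ}
    (h1 : ∀ᶠ t in 𝓝 (0:ℝ), HasDerivAt φ (φ' t) t) (h2 : HasDerivAt φ' L 0)
    (h3 : ∀ᶠ t in 𝓝 (0:ℝ), φ t + φ (-t) - 2 * φ 0 ≤ 2 * c * t ^ 2) : L ≤ 2 * c := by
  by_contra hlt
  push Not at hlt
  set f : ℝ → ℝ := fun t => φ t + φ (-t) - 2 * φ 0 - 2 * c * t ^ 2 with hf
  have hneg : Tendsto (fun t : ℝ => -t) (𝓝 0) (𝓝 0) := by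
    simpa using (continuous_neg (G := ℝ)).tendsto 0
  have hd : ∀ᶠ t in 𝓝 (0:ℝ), HasDerivAt f (φ' t - φ' (-t) - 4 * c * t) t := by
    filter_upwards [h1, hneg.eventually h1] with t ht ht'
    have e1 := ht'.scomp t (hasDerivAt_neg t)
    have e2 := ((hasDerivAt_pow 2 t).const_mul (2 * c))
    have := ((ht.add e1).sub_const (2 * φ 0)).sub e2
    refine this.congr_deriv ?_
    simp
    ring
  have hde : deriv f =ᶠ[𝓝 0] fun t => φ' t - φ' (-t) - 4 * c * t := hd.mono fun t ht => ht.deriv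
  have hd2 : deriv (deriv f) 0 = 2 * L - 4 * c := by
    rw [hde.deriv_eq]
    have h2' : HasDerivAt φ' L (-0) := by simpa using h2
    have e1 := h2'.scomp (0:ℝ) (hasDerivAt_neg (0:ℝ))
    have := (h2.sub e1).sub ((hasDerivAt_id (0:ℝ)).const_mul (4 * c))
    refine (this.congr_deriv ?_).deriv
    simp
    ring
  have h0 : deriv f 0 = 0 := by rw [hd.self_of_nhds.deriv]; simp
  have hmin := isLocalMin_of_deriv_deriv_pos (f := f) (x₀ := 0) (by rw [hd2]; linarith) h0
    hd.self_of_nhds.continuousAt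
  have hz : f =ᶠ[𝓝 0] fun _ => (0:ℝ) := by
    filter_upwards [hmin, h3] with t ht ht3
    have : f 0 = 0 := by simp [hf]; ring
    rw [this] at ht
    refine le_antisymm ?_ ht
    simp only [hf]; linarith
  have : deriv (deriv f) 0 = 0 := by
    rw [hz.deriv.deriv_eq]; simp
  linarith

open scoped MatrixOrder in
lemma aux_det_le {n : ℕ} {M N : Matrix (Fin n) (Fin n) ℝ} (hM : M.PosSemidef)
    (hN : (N - M).PosSemidef) : M.det ≤ N.det := by
  by_cases h0 : M.det = 0
  · rw [h0]
    have : N.PosSemidef := by simpa using hM.add hN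
    exact this.det_nonneg
  obtain ⟨B, hB⟩ := (CStarAlgebra.nonneg_iff_eq_star_mul_self (a := M)).1
    (Matrix.nonneg_iff_posSemidef.2 hM)
  rw [Matrix.star_eq_conjTranspose] at hB
  have hBd : IsUnit B.det := by
    rw [isUnit_iff_ne_zero]
    rintro h
    apply h0
    rw [hB, Matrix.det_mul, h, mul_zero]
  set P := (B⁻¹).conjTranspose * (N - M) * B⁻¹ with hP
  have hPp : P.PosSemidef := hN.conjTranspose_mul_mul_same _
  have h1 : B.conjTranspose * (1 + P) * B = N := by
    have e1 : B.conjTranspose * (B⁻¹).conjTranspose = 1 := by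
      rw [← Matrix.conjTranspose_mul, Matrix.nonsing_inv_mul _ hBd, Matrix.conjTranspose_one]
    have : B.conjTranspose * (1 + P) * B = B.conjTranspose * B +
        (B.conjTranspose * (B⁻¹).conjTranspose) * (N - M) * (B⁻¹ * B) := by
      rw [hP]; noncomm_ring
    rw [this, e1, Matrix.nonsing_inv_mul _ hBd, ← hB]; simp
  have hH : (1 + P).IsHermitian := Matrix.isHermitian_one.add hPp.1
  have h2 : 1 ≤ (1 + P).det := by
    rw [hH.det_eq_prod_eigenvalues]
    have : ∀ i ∈ Finset.univ, (1:ℝ) ≤ hH.eigenvalues i := by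
      intro i _
      rw [hH.eigenvalues_eq i, Matrix.add_mulVec, dotProduct_add, Matrix.one_mulVec]
      have a1 := hPp.dotProduct_mulVec_nonneg (hH.eigenvectorBasis i).ofLp
      have a2 : star (hH.eigenvectorBasis i).ofLp ⬝ᵥ (hH.eigenvectorBasis i).ofLp = 1 := by
        have := hH.eigenvectorBasis.orthonormal.1 i
        have h3 : inner ℝ (hH.eigenvectorBasis i) (hH.eigenvectorBasis i) = (1:ℝ) := by
          rw [real_inner_self_eq_norm_sq, this]; norm_num
        rw [EuclideanSpace.inner_eq_star_dotProduct] at h3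
        rw [dotProduct_comm]; exact h3
      rw [a2]
      simp only [RCLike.re_to_real]
      linarith
    simpa using Finset.one_le_prod this
  have h3 : N.det = M.det * (1 + P).det := by
    rw [← h1, hB, Matrix.det_mul, Matrix.det_mul, Matrix.det_mul]; ring
  rw [h3]
  exact le_mul_of_one_le_right hM.det_nonneg h2

lemma aux_det_rank_one_s7 {n : ℕ} (hn : 1 ≤ n) (e : Fin n → ℝ) (he : e ⬝ᵥ e = 1) (a b k : ℝ)
    (hb : b ≠ 0) :
    (Matrix.of fun i j : Fin n => k * (b * (if i = j then 1 else 0) + (a - b) * (e i * e j))).det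
      = k ^ n * (a * b ^ (n - 1)) := by
  have : (Matrix.of fun i j : Fin n => k * (b * (if i = j then 1 else 0) + (a - b) * (e i * e j)))
      = (k * b) • (1 + Matrix.replicateCol Unit e *
          Matrix.replicateRow Unit (((a - b) / b) • e)) := by
    ext i j
    simp [Matrix.mul_apply, Matrix.one_apply]
    field_simp
    split_ifs <;> simp
  rw [this, Matrix.det_smul, Matrix.det_one_add_replicateCol_mul_replicateRow, smul_dotProduct, he]
  obtain ⟨m, rfl⟩ : ∃ m, n = m + 1 := ⟨n - 1, by omega⟩
  simp only [Fintype.card_fin, smul_eq_mul, Nat.add_sub_cancel]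
  field_simp
  ring

/-- The quadratic form `a s² + b (|z|² - s²)`, `s = ⟪z, e⟫`. -/
noncomputable def auxQ {n : ℕ} (a b : ℝ) (e z : EuclideanSpace ℝ (Fin n)) : ℝ :=
  a * inner ℝ z e ^ 2 + b * (‖z‖ ^ 2 - inner ℝ z e ^ 2)

lemma aux_hessian {n : ℕ} (hn : 1 ≤ n) {u : EuclideanSpace ℝ (Fin n) → ℝ}
    {x e : EuclideanSpace ℝ (Fin n)} (hu : ContDiffAt ℝ 2 u x) (he : ‖e‖ = 1) {a b k : ℝ}
    (hb : b ≠ 0)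
    (hlo : ∀ v, ∀ᶠ t in 𝓝 (0:ℝ), 0 ≤ u (x + t • v) + u (x + (-t) • v) - 2 * u x)
    (hup : ∀ v, ∀ᶠ t in 𝓝 (0:ℝ), u (x + t • v) + u (x + (-t) • v) - 2 * u x
      ≤ 2 * (k * auxQ a b e v) * t ^ 2) :
    hessianDet u x ≤ (2 * k) ^ n * (a * b ^ (n - 1)) := by
  set D := fderiv ℝ (fderiv ℝ u) x with hD
  have hlin : ∀ v : EuclideanSpace ℝ (Fin n), ∀ t : ℝ, HasDerivAt (fun t : ℝ => x + t • v) v t := by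
    intro v t
    simpa using ((hasDerivAt_id t).smul_const v).const_add x
  have hd1 : ∀ v, ∀ᶠ t in 𝓝 (0:ℝ), HasDerivAt (fun t : ℝ => u (x + t • v))
      (fderiv ℝ u (x + t • v) v) t := by
    intro v
    have h1 : ∀ᶠ z in 𝓝 x, DifferentiableAt ℝ u z := by
      filter_upwards [hu.eventually (by simp)] with z hz
      exact hz.differentiableAt (by simp)
    have h2 : Tendsto (fun t : ℝ => x + t • v) (𝓝 0) (𝓝 x) := by
      simpa using (hlin v 0).continuousAt.tendsto
    filter_upwards [h2.eventually h1] with t ht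
    exact ht.hasFDerivAt.comp_hasDerivAt t (hlin v t)
  have hd2 : ∀ v, HasDerivAt (fun t : ℝ => fderiv ℝ u (x + t • v) v) (D v v) 0 := by
    intro v
    have h1 : DifferentiableAt ℝ (fderiv ℝ u) x :=
      (hu.fderiv_right (m := 1) (by norm_num)).differentiableAt (by simp)
    have h2 : HasFDerivAt (fderiv ℝ u) D (x + (0:ℝ) • v) := by simpa using h1.hasFDerivAt
    have h3 := h2.comp_hasDerivAt (0:ℝ) (hlin v 0)
    have h4 := h3.clm_apply (hasDerivAt_const (0:ℝ) v)
    simpa using h4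
  have hpos : ∀ v, 0 ≤ D v v := by
    intro v
    have := aux_second_deriv_le (φ := fun t : ℝ => - u (x + t • v)) (c := 0)
      ((hd1 v).mono fun t ht => ht.neg) (hd2 v).neg
      (by filter_upwards [hlo v] with t ht; simp at ht ⊢; linarith)
    linarith
  have hle : ∀ v, D v v ≤ 2 * (k * auxQ a b e v) := by
    intro v
    exact aux_second_deriv_le (hd1 v) (hd2 v)
      (by filter_upwards [hup v] with t ht; simp at ht ⊢; linarith)
  have hsymm : ∀ v w, D v w = D w v := by
    intro v w
    exact hu.isSymmSndFDerivAt (by simp) v w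
  set M : Matrix (Fin n) (Fin n) ℝ := Matrix.of fun i j : Fin n =>
    iteratedFDeriv ℝ 2 u x ![EuclideanSpace.single i (1 : ℝ), EuclideanSpace.single j (1 : ℝ)]
    with hM
  have hMij : ∀ i j, M i j = D (EuclideanSpace.single i (1 : ℝ)) (EuclideanSpace.single j (1 : ℝ)) := by
    intro i j
    simp [hM, iteratedFDeriv_two_apply, hD]
  have hMq : ∀ v : Fin n → ℝ, star v ⬝ᵥ M.mulVec v = D (WithLp.toLp 2 v) (WithLp.toLp 2 v) := by
    intro v
    have hv : WithLp.toLp 2 v = ∑ i, v i • EuclideanSpace.single i (1 : ℝ) := by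
      ext j
      simp [Finset.sum_apply, Pi.single_apply]
    rw [hv]
    simp only [map_sum, map_smul, sum_apply, smul_apply,
      dotProduct, Matrix.mulVec, hMij, smul_eq_mul, Pi.star_apply, star_trivial, Finset.mul_sum]
    refine Finset.sum_congr rfl fun i _ => Finset.sum_congr rfl fun j _ => ?_
    rw [hsymm (EuclideanSpace.single j (1:ℝ))]
    ring
  set N : Matrix (Fin n) (Fin n) ℝ := Matrix.of fun i j : Fin n =>
    (2 * k) * (b * (if i = j then 1 else 0) + (a - b) * (e i * e j)) with hN
  have hNq : ∀ v : Fin n → ℝ, star v ⬝ᵥ N.mulVec v = 2 * (k * auxQ a b e (WithLp.toLp 2 v)) := by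
    intro v
    have h1 : inner ℝ (WithLp.toLp 2 v) e = ∑ i, v i * e i := by
      simp [PiLp.inner_apply, mul_comm]
    have h2 : ‖WithLp.toLp 2 v‖ ^ 2 = ∑ i, v i * v i := by
      rw [EuclideanSpace.real_norm_sq_eq]
      simp [sq]
    rw [auxQ, h1, h2]
    have h3 : ∀ i, N.mulVec v i = 2 * k * (b * v i + (a - b) * e i * ∑ j, v j * e j) := by
      intro i
      simp only [Matrix.mulVec, dotProduct, hN, Matrix.of_apply]
      have : ∀ j, 2 * k * (b * (if i = j then 1 else 0) + (a - b) * (e i * e j)) * v j =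
          (if i = j then 2 * k * b * v j else 0) + 2 * k * (a - b) * e i * (v j * e j) := by
        intro j; split_ifs <;> ring
      rw [Finset.sum_congr rfl fun j _ => this j, Finset.sum_add_distrib, ← Finset.mul_sum]
      simp; ring
    simp only [dotProduct, h3, Pi.star_apply, star_trivial]
    have : ∀ i, v i * (2 * k * (b * v i + (a - b) * e i * ∑ j, v j * e j)) =
        2 * k * b * (v i * v i) + 2 * k * (a - b) * (∑ j, v j * e j) * (v i * e i) := by
      intro i; ring
    rw [Finset.sum_congr rfl fun j _ => this j, Finset.sum_add_distrib, ← Finset.mul_sum,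
      ← Finset.mul_sum]
    ring
  have hMH : M.IsHermitian := by
    ext i j
    simp [Matrix.conjTranspose_apply, hMij, hsymm (EuclideanSpace.single j (1:ℝ))]
  have hNH : N.IsHermitian := by
    ext i j
    simp only [Matrix.conjTranspose_apply, hN, Matrix.of_apply, star_trivial]
    rw [mul_comm (e j)]
    simp only [eq_comm]
  have hee : e.ofLp ⬝ᵥ e.ofLp = 1 := by
    have : ‖e‖ ^ 2 = 1 := by rw [he]; norm_num
    rw [EuclideanSpace.real_norm_sq_eq] at this
    rw [← this]
    simp [dotProduct, sq]
  have hdet : N.det = (2 * k) ^ n * (a * b ^ (n - 1)) := aux_det_rank_one_s7 hn e.ofLp hee a b (2 * k) hb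
  rw [← hdet]
  refine aux_det_le (Matrix.PosSemidef.of_dotProduct_mulVec_nonneg hMH fun v => ?_)
    (Matrix.PosSemidef.of_dotProduct_mulVec_nonneg (hNH.sub hMH) fun v => ?_)
  · rw [hMq]; exact hpos _
  · rw [Matrix.sub_mulVec, dotProduct_sub, hMq, hNq]
    have := hle (WithLp.toLp 2 v)
    linarith

lemma aux_normal {n : ℕ} {Ω : Set (EuclideanSpace ℝ (Fin n))}
    {w x₀ c : EuclideanSpace ℝ (Fin n)} (hw : w ≠ 0) {r : ℝ} (hr : 0 < r)
    (hsup : ∀ z ∈ closure Ω, inner ℝ w z ≤ inner ℝ w x₀)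
    (hball : Metric.closedBall c r ⊆ closure Ω) (hc : dist x₀ c = r) :
    x₀ - c = r • (‖w‖⁻¹ • w) := by
  have hw' : 0 < ‖w‖ := norm_pos_iff.2 hw
  have hne : ‖(‖w‖⁻¹ • w)‖ = 1 := by
    rw [norm_smul, norm_inv, norm_norm, inv_mul_cancel₀ hw'.ne']
  have h1 := hsup (c + r • (‖w‖⁻¹ • w)) (hball (by
    rw [Metric.mem_closedBall, dist_eq_norm, add_sub_cancel_left, norm_smul, hne,
      Real.norm_of_nonneg hr.le, mul_one]))
  rw [inner_add_right, inner_smul_right, inner_smul_right, real_inner_self_eq_norm_sq] at h1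
  have h2 : r * ‖w‖ ≤ inner ℝ w (x₀ - c) := by
    rw [inner_sub_right]
    have : ‖w‖⁻¹ * ‖w‖ ^ 2 = ‖w‖ := by field_simp
    rw [this] at h1
    linarith
  have h3 : r ≤ inner ℝ (x₀ - c) (‖w‖⁻¹ • w) := by
    rw [inner_smul_right, real_inner_comm, ← div_eq_inv_mul, le_div_iff₀ hw']
    exact h2
  have h4 : ‖x₀ - c‖ = r := by rw [← dist_eq_norm]; exact hc
  have h5 := norm_sub_sq_real (x₀ - c) (r • (‖w‖⁻¹ • w))
  rw [norm_smul, hne, h4, Real.norm_of_nonneg hr.le, inner_smul_right] at h5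
  have h6 : ‖(x₀ - c) - r • (‖w‖⁻¹ • w)‖ ^ 2 ≤ 0 := by
    rw [h5]; nlinarith
  have h7 : ‖(x₀ - c) - r • (‖w‖⁻¹ • w)‖ = 0 := by
    have := sq_nonneg ‖(x₀ - c) - r • (‖w‖⁻¹ • w)‖
    exact pow_eq_zero_iff (two_ne_zero) |>.1 (le_antisymm h6 this)
  exact sub_eq_zero.1 (norm_eq_zero.1 h7)

lemma aux_geom {n : ℕ} (hn : 2 ≤ n) {Ω : Set (EuclideanSpace ℝ (Fin n))} {R : ℝ} (hR : 0 < R)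
    (ho : IsOpen Ω) (hc : Convex ℝ Ω) (hbd : Bornology.IsBounded Ω)
    (hs : InteriorSphereCond Ω R) {y : EuclideanSpace ℝ (Fin n)} (hy : y ∈ Ω) :
    ∃ (d ρ : ℝ) (e y₀ : EuclideanSpace ℝ (Fin n)), d = Metric.infDist y (frontier Ω) ∧ 0 < d ∧
      d ≤ ρ ∧ R ≤ ρ ∧ ‖e‖ = 1 ∧ Metric.ball y₀ ρ ⊆ Ω ∧ y - y₀ = (ρ - d) • e := by
  have : Nonempty (Fin n) := ⟨⟨0, by omega⟩⟩
  have hne : Ω ≠ Set.univ := by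
    rintro rfl
    exact NormedSpace.unbounded_univ ℝ (EuclideanSpace ℝ (Fin n)) hbd
  obtain ⟨x₀, hx₀, hdx⟩ := exists_mem_frontier_infDist_compl_eq_dist hy hne
  have hfc : frontier Ω ⊆ Ωᶜ := by
    rw [ho.frontier_eq]
    exact fun z hz => hz.2
  have hd : Metric.infDist y Ωᶜ = Metric.infDist y (frontier Ω) := by
    apply le_antisymm
    · exact Metric.infDist_le_infDist_of_subset hfc ⟨x₀, hx₀⟩
    · rw [hdx]; exact Metric.infDist_le_dist_of_mem hx₀
  have hx₀n : x₀ ∉ Ω := hfc hx₀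
  set d := Metric.infDist y (frontier Ω) with hddef
  have hdpos : 0 < d := by
    rw [← hd, hdx, dist_pos]
    rintro rfl
    exact hx₀n hy
  have hbally : Metric.ball y d ⊆ Ω := by
    rw [← hd]; exact Metric.ball_infDist_compl_subset
  obtain ⟨f, hf⟩ := geometric_hahn_banach_open_point hc ho hx₀n
  set w := (InnerProductSpace.toDual ℝ (EuclideanSpace ℝ (Fin n))).symm f with hwdef
  have hwf : ∀ z, inner ℝ w z = f z := fun z => InnerProductSpace.toDual_symm_apply
  have hw : w ≠ 0 := by
    intro h
    have := hf y hy
    rw [← hwf, ← hwf, h] at this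
    simp at this
  have hsup : ∀ z ∈ closure Ω, inner ℝ w z ≤ inner ℝ w x₀ := by
    intro z hz
    rw [hwf, hwf]
    exact closure_minimal (t := {z | f z ≤ f x₀}) (fun z hz => (hf z hz).le)
      (isClosed_le f.continuous continuous_const) hz
  have hw' : 0 < ‖w‖ := norm_pos_iff.2 hw
  have hne : ‖(‖w‖⁻¹ • w)‖ = 1 := by
    rw [norm_smul, norm_inv, norm_norm, inv_mul_cancel₀ hw'.ne']
  have e1 : x₀ - y = d • (‖w‖⁻¹ • w) := by
    refine aux_normal hw hdpos hsup ?_ ?_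
    · rw [← closure_ball y hdpos.ne']
      exact closure_mono hbally
    · rw [dist_comm, ← hdx, hd]
  by_cases hdR : R ≤ d
  · exact ⟨d, d, ‖w‖⁻¹ • w, y, rfl, hdpos, le_rfl, hdR, hne, hbally, by simp⟩
  · push Not at hdR
    obtain ⟨y₀, hb, hsph⟩ := hs x₀ hx₀
    have e2 : x₀ - y₀ = R • (‖w‖⁻¹ • w) := aux_normal hw hR hsup hb hsph
    refine ⟨d, R, ‖w‖⁻¹ • w, y₀, rfl, hdpos, hdR.le, le_rfl, hne, ?_, ?_⟩
    · have h1 : Metric.ball y₀ R ⊆ interior (closure Ω) :=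
        interior_maximal (Metric.ball_subset_closedBall.trans hb) Metric.isOpen_ball
      rwa [hc.interior_closure_eq_interior_of_nonempty_interior
        (by rw [ho.interior_eq]; exact ⟨y, hy⟩), ho.interior_eq] at h1
    · rw [sub_smul, ← e1, ← e2]; abel

lemma auxQ_cont {n : ℕ} (a b : ℝ) (e y : EuclideanSpace ℝ (Fin n)) :
    Continuous fun x => auxQ a b e (x - y) := by
  unfold auxQ
  fun_prop

lemma auxQ_neg {n : ℕ} (a b : ℝ) (e z : EuclideanSpace ℝ (Fin n)) :
    auxQ a b e (-z) = auxQ a b e z := by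
  simp [auxQ, inner_neg_left]

lemma auxQ_line {n : ℕ} (a b t : ℝ) (e z v : EuclideanSpace ℝ (Fin n)) :
    auxQ a b e (z + t • v) + auxQ a b e (z + (-t) • v) - 2 * auxQ a b e z
      = 2 * auxQ a b e v * t ^ 2 := by
  simp only [auxQ, inner_add_left, inner_smul_left, norm_add_sq_real, inner_smul_right, norm_smul,
    mul_pow, Real.norm_eq_abs, sq_abs, conj_trivial]
  ring

/-- The ellipsoid lies well inside the ball. -/
lemma aux_ellipsoid {n : ℕ} {d ρ R : ℝ} {e y y₀ x : EuclideanSpace ℝ (Fin n)} (hd : 0 < d)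
    (hdρ : d ≤ ρ) (hR : 0 < R) (hRρ : R ≤ ρ) (he : ‖e‖ = 1) (hyy : y - y₀ = (ρ - d) • e)
    (hx : auxQ (16 / d ^ 2) (2 / (d * R)) e (x - y) ≤ 1) :
    dist x y₀ ≤ ρ - d / 4 := by
  set z := x - y with hz
  set s : ℝ := inner ℝ z e with hs
  have hcs : s ^ 2 ≤ ‖z‖ ^ 2 := by
    have h1 := abs_real_inner_le_norm z e
    rw [he, mul_one] at h1
    rw [← sq_abs]
    gcongr
  rw [auxQ, ← hs] at hx
  have ha : 0 < 16 / d ^ 2 := by positivity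
  have hb : 0 < 2 / (d * R) := by positivity
  have hp : 0 ≤ 2 / (d * R) * (‖z‖ ^ 2 - s ^ 2) := mul_nonneg hb.le (by linarith)
  have hq : 0 ≤ 16 / d ^ 2 * s ^ 2 := by positivity
  have h1 : s ^ 2 ≤ (d / 4) ^ 2 := by
    have : 16 / d ^ 2 * s ^ 2 ≤ 1 := by linarith
    rw [div_mul_eq_mul_div, div_le_one (by positivity)] at this
    nlinarith
  have h2 : ‖z‖ ^ 2 - s ^ 2 ≤ d * R / 2 := by
    have : 2 / (d * R) * (‖z‖ ^ 2 - s ^ 2) ≤ 1 := by linarith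
    rw [div_mul_eq_mul_div, div_le_one (by positivity)] at this
    linarith
  have h3 : |s| ≤ d / 4 := abs_le_of_sq_le_sq h1 (by positivity)
  obtain ⟨h4, h5⟩ := abs_le.1 h3
  have hxy : x - y₀ = z + (ρ - d) • e := by rw [← hyy, hz]; abel
  rw [dist_eq_norm, hxy]
  have h6 := norm_add_sq_real z ((ρ - d) • e)
  rw [inner_smul_right, norm_smul, he, mul_one, Real.norm_eq_abs, sq_abs, ← hs] at h6
  refine le_of_sq_le_sq ?_ (by linarith)
  rw [h6]
  have h7 : (s + (ρ - d)) ^ 2 ≤ (ρ - 3 * d / 4) ^ 2 := by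
    apply sq_le_sq' <;> linarith
  have h8 : d * R ≤ d * ρ := by gcongr
  have h9 : d * d ≤ d * ρ := by gcongr
  nlinarith

lemma aux_main {n : ℕ} (hn : 2 ≤ n) {A α β R : ℝ} (hA : 0 < A) (hα : 0 ≤ α) (hR : 0 < R)
    (hβ : (n : ℝ) + 1 ≤ β) {Ω : Set (EuclideanSpace ℝ (Fin n))}
    {F : EuclideanSpace ℝ (Fin n) → ℝ → ℝ} {u : EuclideanSpace ℝ (Fin n) → ℝ}
    (ho : IsOpen Ω) (hc : Convex ℝ Ω) (hbd : Bornology.IsBounded Ω)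
    (hs : InteriorSphereCond Ω R) (hF : SatisfiesFLowerBound Ω F A α β)
    (hu : IsClassicalSolution Ω F u) {y : EuclideanSpace ℝ (Fin n)} (hy : y ∈ Ω) :
    0 < Metric.infDist y (frontier Ω) ∧
    A * (Metric.infDist y (frontier Ω) / 4) ^ (β - n - 1) * (2 * |u y|) ^ (-α) ≤
      (2 * |u y|) ^ n * ((16 / Metric.infDist y (frontier Ω) ^ 2) *
        (2 / (Metric.infDist y (frontier Ω) * R)) ^ (n - 1)) := by
  obtain ⟨d, ρ, e, y₀, hd, hdpos, hdρ, hRρ, he, hball, hyy⟩ := aux_geom hn hR ho hc hbd hs hy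
  rw [← hd]
  refine ⟨hdpos, ?_⟩
  obtain ⟨-, hcv, hcd, hneg, -, heq⟩ := hu
  obtain ⟨-, -, hFl⟩ := hF
  set a := 16 / d ^ 2 with ha
  set b := 2 / (d * R) with hb
  have hbpos : 0 < b := by positivity
  set m := |u y| with hm
  have hmu : u y = -m := by rw [hm, abs_of_neg (hneg y hy)]; ring
  have hmpos : 0 < m := by have := hneg y hy; linarith
  set E := {x | auxQ a b e (x - y) ≤ 1} with hE
  have hEb : ∀ x ∈ E, Metric.ball x (d / 4) ⊆ Ω := by
    intro x hx
    refine Set.Subset.trans ?_ hball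
    apply Metric.ball_subset_ball'
    have := aux_ellipsoid hdpos hdρ hR hRρ he hyy hx
    linarith
  have hEΩ : E ⊆ Ω := fun x hx => hEb x hx (Metric.mem_ball_self (by positivity))
  have hEd : ∀ x ∈ E, d / 4 ≤ Metric.infDist x (frontier Ω) := by
    intro x hx
    have hfne : (frontier Ω).Nonempty := by
      by_contra h
      rw [Set.not_nonempty_iff_eq_empty] at h
      rw [h, Metric.infDist_empty] at hd
      linarith
    rw [Metric.le_infDist hfne]
    intro z hz
    by_contra hlt
    push Not at hlt
    have h1 : z ∈ Ω := hEb x hx (by rw [Metric.mem_ball, dist_comm]; exact hlt)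
    rw [ho.frontier_eq] at hz
    exact hz.2 h1
  have hEm : ∀ x ∈ E, |u x| ≤ 2 * m := by
    intro x hx
    have hx' : y + y - x ∈ E := by
      have : y + y - x - y = -(x - y) := by abel
      simp only [hE, Set.mem_ofPred_eq, this, auxQ_neg]
      exact hx
    have h1 := hcv.2 (hEΩ hx) (hEΩ hx') (by norm_num : (0:ℝ) ≤ 1/2) (by norm_num : (0:ℝ) ≤ 1/2)
      (by norm_num)
    have h2 : (1/2:ℝ) • x + (1/2:ℝ) • (y + y - x) = y := by module
    rw [h2] at h1
    have h3 := hneg _ (hEΩ hx')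
    have h4 := hneg _ (hEΩ hx)
    simp only [smul_eq_mul] at h1
    rw [abs_of_neg h4]
    linarith
  have hEclosed : IsClosed E := isClosed_le (auxQ_cont a b e y) continuous_const
  have hEc : IsCompact E := Metric.isCompact_of_isClosed_isBounded hEclosed (hbd.subset hEΩ)
  have hyE : y ∈ E := by simp [hE, auxQ]
  have hcont : ContinuousOn (fun x => u x - m * (auxQ a b e (x - y) - 1)) E := by
    refine (hcd.continuousOn.mono hEΩ).sub (Continuous.continuousOn ?_)
    have := auxQ_cont a b e y
    fun_prop
  obtain ⟨x, hxE, hmax⟩ := hEc.exists_isMaxOn ⟨y, hyE⟩ hcont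
  have hxΩ := hEΩ hxE
  have hlt : auxQ a b e (x - y) < 1 := by
    refine lt_of_le_of_ne hxE fun h => ?_
    have h1 := hmax hyE
    simp only [Set.mem_ofPred_eq, h] at h1
    have h2 := hneg x hxΩ
    have h3 : auxQ a b e (y - y) = 0 := by simp [auxQ]
    rw [h3, hmu] at h1
    linarith
  have hnhds : ∀ v : EuclideanSpace ℝ (Fin n), Tendsto (fun t : ℝ => x + t • v) (𝓝 0) (𝓝 x) := by
    intro v
    have : Continuous fun t : ℝ => x + t • v := by fun_prop
    simpa using this.tendsto 0
  have hneg0 : Tendsto (fun t : ℝ => -t) (𝓝 0) (𝓝 0) := by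
    simpa using (continuous_neg (G := ℝ)).tendsto 0
  have hEn : E ∈ 𝓝 x := by
    have : {z | auxQ a b e (z - y) < 1} ∈ 𝓝 x :=
      (isOpen_lt (auxQ_cont a b e y) continuous_const).mem_nhds hlt
    filter_upwards [this] with z hz using le_of_lt hz
  have hline : ∀ v : EuclideanSpace ℝ (Fin n), ∀ᶠ t in 𝓝 (0:ℝ),
      x + t • v ∈ E ∧ x + (-t) • v ∈ E := fun v =>
    ((hnhds v).eventually hEn).and (((hnhds v).comp hneg0).eventually hEn)
  have hdet : hessianDet u x ≤ (2 * m) ^ n * (a * b ^ (n - 1)) := by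
    refine aux_hessian (by omega) (hcd.contDiffAt (ho.mem_nhds hxΩ)) he hbpos.ne' ?_ ?_
    · intro v
      filter_upwards [hline v] with t ht
      have h1 := hcv.2 (hEΩ ht.1) (hEΩ ht.2) (by norm_num : (0:ℝ) ≤ 1/2)
        (by norm_num : (0:ℝ) ≤ 1/2) (by norm_num)
      have h2 : (1/2:ℝ) • (x + t • v) + (1/2:ℝ) • (x + (-t) • v) = x := by module
      rw [h2] at h1
      simp only [smul_eq_mul] at h1
      linarith
    · intro v
      filter_upwards [hline v] with t ht
      have h1 := hmax ht.1
      have h2 := hmax ht.2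
      simp only [Set.mem_ofPred_eq] at h1 h2
      have h3 := auxQ_line a b t e (x - y) v
      have e1 : x + t • v - y = x - y + t • v := by abel
      have e2 : x + (-t) • v - y = x - y + (-t) • v := by abel
      rw [e1] at h1
      rw [e2] at h2
      have h4 : m * (auxQ a b e (x - y + t • v) + auxQ a b e (x - y + (-t) • v)
        - 2 * auxQ a b e (x - y)) = m * (2 * auxQ a b e v * t ^ 2) := by rw [h3]
      linarith
  refine le_trans ?_ hdet
  rw [heq x hxΩ]
  refine le_trans ?_ (hFl x hxΩ (u x) (hneg x hxΩ))
  have h1 : (d / 4) ^ (β - n - 1) ≤ Metric.infDist x (frontier Ω) ^ (β - n - 1) :=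
    Real.rpow_le_rpow (by positivity) (hEd x hxE) (by linarith)
  have h2 : (2 * m) ^ (-α) ≤ |u x| ^ (-α) :=
    Real.rpow_le_rpow_of_nonpos (abs_pos.2 (hneg x hxΩ).ne) (hEm x hxE) (by linarith)
  have h3 : 0 ≤ Metric.infDist x (frontier Ω) ^ (β - n - 1) :=
    Real.rpow_nonneg Metric.infDist_nonneg _
  have h4 : 0 ≤ (2 * m) ^ (-α) := Real.rpow_nonneg (by positivity) _
  exact mul_le_mul (mul_le_mul_of_nonneg_left h1 hA.le) h2 h4 (mul_nonneg hA.le h3)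

lemma aux_final {n : ℕ} (hn : 2 ≤ n) {A α β R d m : ℝ} (hA : 0 < A) (hα : 0 ≤ α) (hR : 0 < R)
    (hd : 0 < d) (hm : 0 < m)
    (h : A * (d / 4) ^ (β - n - 1) * (2 * m) ^ (-α) ≤
      (2 * m) ^ n * ((16 / d ^ 2) * (2 / (d * R)) ^ (n - 1))) :
    (1 / 2) * (A * 4 ^ (-(β - n - 1)) * (R / 2) ^ (n - 1) / 16) ^ (1 / (n + α)) *
      d ^ (β / (n + α)) ≤ m := by
  have hnα : 0 < (n:ℝ) + α := by
    have : (2:ℝ) ≤ n := by exact_mod_cast hn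
    linarith
  set c := A * 4 ^ (-(β - n - 1)) * (R / 2) ^ (n - 1) / 16 with hc
  have hcpos : 0 < c := by positivity
  have h2m : 0 < 2 * m := by positivity
  have key : c * d ^ β ≤ (2 * m) ^ ((n:ℝ) + α) := by
    rw [Real.rpow_add h2m, Real.rpow_natCast]
    rw [Real.rpow_neg h2m.le, ← div_eq_mul_inv, div_le_iff₀ (by positivity)] at h
    have e1 : d ^ β = d ^ (β - n - 1) * (d ^ 2 * d ^ (n - 1)) := by
      have : β = (β - n - 1) + ((n + 1 : ℕ) : ℝ) := by push_cast; ring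
      conv_lhs => rw [this, Real.rpow_add hd, Real.rpow_natCast]
      rw [← pow_add]
      congr 2
      omega
    have e2 : (d / 4) ^ (β - n - 1) = d ^ (β - n - 1) * 4 ^ (-(β - n - 1)) := by
      rw [Real.div_rpow hd.le (by norm_num), Real.rpow_neg (by norm_num)]
      rfl
    have e3 : (2 / (d * R)) ^ (n - 1) * (d ^ (n - 1) * (R / 2) ^ (n - 1)) = 1 := by
      rw [← mul_pow, ← mul_pow]
      have : 2 / (d * R) * (d * (R / 2)) = 1 := by field_simp
      rw [this, one_pow]
    set P := (2 / (d * R)) ^ (n - 1)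
    set S := d ^ (n - 1)
    set T := (R / 2) ^ (n - 1)
    have hST : 0 < S * T := by positivity
    have h' := mul_le_mul_of_nonneg_right h (show 0 ≤ d ^ 2 / 16 * (S * T) by positivity)
    have e4 : (2 * m) ^ n * (16 / d ^ 2 * P) * (2 * m) ^ α * (d ^ 2 / 16 * (S * T)) =
        (2 * m) ^ n * (2 * m) ^ α * (P * (S * T)) := by field_simp
    rw [e4, e3, mul_one] at h'
    refine le_trans (le_of_eq ?_) h'
    rw [e1, e2, hc]
    ring
  have h1 := Real.rpow_le_rpow (by positivity) key (show 0 ≤ 1 / ((n:ℝ) + α) by positivity)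
  rw [← Real.rpow_mul h2m.le, mul_one_div_cancel hnα.ne', Real.rpow_one,
    Real.mul_rpow hcpos.le (by positivity), ← Real.rpow_mul hd.le, mul_one_div] at h1
  linarith

/-- Theorem 1.3 (ii): on a domain satisfying the interior sphere condition with radius `R`,
`|u(y)| ≥ C d_y^{β/(n+α)}` with `C > 0` depending only on `β, α, A, n` and `R`. -/
theorem pointwise_lower_bound_interior_sphere
    (n : ℕ) (hn : 2 ≤ n) (A α β R : ℝ) (hA : 0 < A) (hα : 0 ≤ α) (hR : 0 < R)
    (hβ : (n : ℝ) + 1 ≤ β) :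
    ∃ C : ℝ, 0 < C ∧
      ∀ (Ω : Set (EuclideanSpace ℝ (Fin n))) (F : EuclideanSpace ℝ (Fin n) → ℝ → ℝ)
        (u : EuclideanSpace ℝ (Fin n) → ℝ),
        IsOpen Ω → Convex ℝ Ω → Bornology.IsBounded Ω → Ω.Nonempty →
        InteriorSphereCond Ω R →
        SatisfiesFLowerBound Ω F A α β →
        IsClassicalSolution Ω F u →
        ∀ y ∈ Ω, C * Metric.infDist y (frontier Ω) ^ (β / (n + α)) ≤ |u y| := by
  refine ⟨(1 / 2) * (A * 4 ^ (-(β - n - 1)) * (R / 2) ^ (n - 1) / 16) ^ (1 / (n + α)),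
    by positivity, ?_⟩
  intro Ω F u ho hc hbd _ hs hF hu y hy
  obtain ⟨hd, h⟩ := aux_main hn hA hα hR hβ ho hc hbd hs hF hu hy
  exact aux_final hn hA hα hR hd (abs_pos.2 (hu.2.2.2.1 y hy).ne) h
end
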